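/- arXiv:2210.07987 — 3 statements merged into one kernel-verified Lean document; each statement's English description precedes it below -/
import Mathlib

section
/- For every integer d ≥ 1, every q > 0, every μ ∈ ℝ^d and every symmetric positive definite matrix C ∈ ℝ^{d×d}, the function p(u) = (q/2) (2π)^{−d/2} det(C)^{−1/2} · r(u)^{(q/2−1)(d/2)} · exp{−(1/2) r(u)^{q/2}}, where r(u) = (u−μ)ᵀ C^{−1} (u−μ), integrates to 1 over ℝ^d, i.e. the multivariate q-exponential density is a genuine probability density function. -/
open Real MeasureTheory Matrix

/-!
The whitening substitution `v = C^(-1/2) (u - μ)` turns `r(u)` into `‖v‖²` at the cost of the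
Jacobian `√(det C)`. In polar coordinates the remaining radial integral is
`|S^(n-1)| ∫ y^(n-1+s) exp(-y^q/2) dy`, a Gamma integral. The exponent `s = (q/2 - 1) n` of the
density is the one for which the value of the Gamma function in it is `Γ(n/2)`, whatever `q` is,
and this cancels the `Γ(n/2)` in the surface area `|S^(n-1)| = 2 π^(n/2) / Γ(n/2)`.
-/

open Module Metric

section Radial

variable {E : Type*} [NormedAddCommGroup E] [MeasurableSpace E] [BorelSpace E] [Nontrivial E]

theorem integral_norm_rpow_mul_exp_neg_mul_norm_rpow [NormedSpace ℝ E] [FiniteDimensional ℝ E]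
    (ν : Measure E) [ν.IsAddHaarMeasure] {p s b : ℝ}
    (hp : 0 < p) (hs : 0 < finrank ℝ E + s) (hb : 0 < b) :
    ∫ x, ‖x‖ ^ s * exp (-b * ‖x‖ ^ p) ∂ν =
      finrank ℝ E * ν.real (ball 0 1) *
        (b ^ (-(finrank ℝ E + s) / p) * (1 / p) * Gamma ((finrank ℝ E + s) / p)) := by
  have radial_integrand : ∀ y ∈ Set.Ioi (0 : ℝ),
      y ^ (finrank ℝ E - 1) • (y ^ s * exp (-b * y ^ p)) =
        y ^ (finrank ℝ E + s - 1) * exp (-b * y ^ p) := by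
    intro y (hy : 0 < y)
    rw [smul_eq_mul, ← mul_assoc, ← rpow_natCast, ← rpow_add hy, Nat.cast_pred finrank_pos,
      sub_add_eq_add_sub]
  rw [integral_fun_norm_addHaar ν (fun y ↦ y ^ s * exp (-b * y ^ p)),
    setIntegral_congr_fun measurableSet_Ioi radial_integrand,
    integral_rpow_mul_exp_neg_mul_rpow hp (by linarith) hb, sub_add_cancel, nsmul_eq_mul,
    smul_eq_mul, ← mul_assoc (finrank ℝ E : ℝ)]

theorem finrank_mul_volume_real_unitBall [InnerProductSpace ℝ E] [FiniteDimensional ℝ E] :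
    finrank ℝ E * volume.real (ball (0 : E) 1) =
      2 * π ^ (finrank ℝ E / 2 : ℝ) / Gamma (finrank ℝ E / 2) := by
  have dim_pos : 0 < (finrank ℝ E : ℝ) := Nat.cast_pos.2 finrank_pos
  have half_dim_pos : 0 < (finrank ℝ E / 2 : ℝ) := half_pos dim_pos
  have Gamma_ne_zero : Gamma (finrank ℝ E / 2) ≠ 0 := (Gamma_pos_of_pos half_dim_pos).ne'
  rw [measureReal_def, InnerProductSpace.volume_ball, Gamma_add_one half_dim_pos.ne',
    ENNReal.ofReal_one, one_pow, one_mul, ENNReal.toReal_ofReal (by positivity),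
    ← rpow_natCast, ← rpow_div_two_eq_sqrt _ pi_pos.le]
  field_simp [Gamma_ne_zero]

theorem integral_qED_kernel_norm_sq [InnerProductSpace ℝ E] [FiniteDimensional ℝ E]
    {q : ℝ} (hq : 0 < q) :
    ∫ x : E, (‖x‖ ^ 2) ^ ((q / 2 - 1) * (finrank ℝ E / 2 : ℝ)) *
        exp (-(1 / 2) * (‖x‖ ^ 2) ^ (q / 2)) =
      2 / q * (2 * π) ^ (finrank ℝ E / 2 : ℝ) := by
  have dim_pos : 0 < (finrank ℝ E : ℝ) := Nat.cast_pos.2 finrank_pos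
  have sq_rpow (x : E) (t : ℝ) : (‖x‖ ^ 2) ^ t = ‖x‖ ^ (2 * t) := by
    rw [rpow_mul (norm_nonneg x), rpow_two]
  have total_degree :
      (finrank ℝ E : ℝ) + 2 * ((q / 2 - 1) * (finrank ℝ E / 2)) = q * (finrank ℝ E / 2) := by
    ring
  have Gamma_ne_zero : Gamma (finrank ℝ E / 2) ≠ 0 := (Gamma_pos_of_pos (half_pos dim_pos)).ne'
  simp only [sq_rpow, mul_div_cancel₀ q two_ne_zero]
  rw [integral_norm_rpow_mul_exp_neg_mul_norm_rpow volume hq (by rw [total_degree]; positivity)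
      one_half_pos, finrank_mul_volume_real_unitBall, total_degree, neg_div,
    mul_div_cancel_left₀ _ hq.ne', mul_rpow zero_le_two pi_pos.le, rpow_neg one_half_pos.le,
    one_div, inv_rpow zero_le_two, inv_inv]
  field_simp [Gamma_ne_zero]

end Radial

section Whitening

theorem integral_comp_linearMap {E F : Type*} [NormedAddCommGroup E] [NormedSpace ℝ E]
    [MeasurableSpace E] [BorelSpace E] [FiniteDimensional ℝ E]
    [NormedAddCommGroup F] [NormedSpace ℝ F] (ν : Measure E) [ν.IsAddHaarMeasure]
    {L : E →ₗ[ℝ] E} (hL : LinearMap.det L ≠ 0) (f : E → F) :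
    ∫ x, f (L x) ∂ν = |LinearMap.det L|⁻¹ • ∫ x, f x ∂ν := by
  have hL_embedding : MeasurableEmbedding L :=
    (L.equivOfDetNeZero hL).toContinuousLinearEquiv.toHomeomorph.measurableEmbedding
  rw [← hL_embedding.integral_map, Measure.map_linearMap_addHaar_eq_smul_addHaar ν hL,
    integral_smul_measure, ENNReal.toReal_ofReal (abs_nonneg _), abs_inv]

variable {ι : Type*} [Fintype ι]

theorem norm_toLp_sq_eq_dotProduct_self (v : ι → ℝ) : ‖WithLp.toLp 2 v‖ ^ 2 = v ⬝ᵥ v := by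
  rw [EuclideanSpace.real_norm_sq_eq]
  simp only [dotProduct, sq]

variable [DecidableEq ι] {A : Matrix ι ι ℝ}

open scoped MatrixOrder in
theorem dotProduct_mulVec_eq_sqrt_mulVec_dotProduct_self (hA : A.PosSemidef) (v : ι → ℝ) :
    v ⬝ᵥ A *ᵥ v = (CFC.sqrt A *ᵥ v) ⬝ᵥ (CFC.sqrt A *ᵥ v) := by
  have sqrt_symm : (CFC.sqrt A)ᵀ = CFC.sqrt A := (CFC.sqrt_nonneg A).posSemidef.isHermitian
  rw [dotProduct_mulVec (CFC.sqrt A *ᵥ v), ← mulVec_transpose, sqrt_symm, mulVec_mulVec,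
    CFC.sqrt_mul_sqrt_self A hA.nonneg, dotProduct_comm]

open scoped MatrixOrder in
theorem integral_comp_posDef_dotProduct_mulVec {F : Type*} [NormedAddCommGroup F]
    [NormedSpace ℝ F] (hA : A.PosDef) (f : ℝ → F) :
    ∫ v : ι → ℝ, f (v ⬝ᵥ A *ᵥ v) = (√A.det)⁻¹ • ∫ x : EuclideanSpace ℝ ι, f (‖x‖ ^ 2) := by
  have det_sqrt : LinearMap.det (toLin' (CFC.sqrt A)) = √A.det := by
    rw [LinearMap.det_toLin', hA.posSemidef.det_sqrt, RCLike.sqrt_real]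
  have det_sqrt_pos : 0 < √A.det := sqrt_pos.2 hA.det_pos
  calc ∫ v : ι → ℝ, f (v ⬝ᵥ A *ᵥ v)
      = ∫ v : ι → ℝ, f (‖WithLp.toLp 2 (toLin' (CFC.sqrt A) v)‖ ^ 2) := by
        simp only [dotProduct_mulVec_eq_sqrt_mulVec_dotProduct_self hA.posSemidef,
          norm_toLp_sq_eq_dotProduct_self, toLin'_apply]
    _ = (√A.det)⁻¹ • ∫ v : ι → ℝ, f (‖WithLp.toLp 2 v‖ ^ 2) := by
        rw [integral_comp_linearMap volume (det_sqrt ▸ det_sqrt_pos.ne')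
          (fun v ↦ f (‖WithLp.toLp 2 v‖ ^ 2)), det_sqrt, abs_of_pos det_sqrt_pos]
    _ = (√A.det)⁻¹ • ∫ x : EuclideanSpace ℝ ι, f (‖x‖ ^ 2) := by
        rw [(PiLp.volume_preserving_toLp ι).integral_comp
          (MeasurableEquiv.toLp 2 (ι → ℝ)).measurableEmbedding (fun x ↦ f (‖x‖ ^ 2))]

end Whitening

theorem qED_density_integrates_to_one_general {ι : Type*} [Fintype ι] [DecidableEq ι] [Nonempty ι]
    {q : ℝ} (hq : 0 < q) (μ : ι → ℝ) {C : Matrix ι ι ℝ} (hC : C.PosDef) :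
    ∫ u : ι → ℝ,
      q / 2 * (2 * π) ^ (-(Fintype.card ι : ℝ) / 2) * C.det ^ (-(1 : ℝ) / 2) *
        ((u - μ) ⬝ᵥ (C⁻¹ *ᵥ (u - μ))) ^ ((q / 2 - 1) * ((Fintype.card ι : ℝ) / 2)) *
        exp (-(1 / 2) * ((u - μ) ⬝ᵥ (C⁻¹ *ᵥ (u - μ))) ^ (q / 2)) = 1 := by
  set n : ℝ := (Fintype.card ι : ℝ) with hn
  have det_pos : 0 < C.det := hC.det_pos
  have jacobian : (√C⁻¹.det)⁻¹ = √C.det := by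
    rw [det_nonsing_inv, Ring.inverse_eq_inv', sqrt_inv, inv_inv]
  have radial := integral_qED_kernel_norm_sq (E := EuclideanSpace ℝ ι) hq
  rw [finrank_euclideanSpace, ← hn] at radial
  calc _ = q / 2 * (2 * π) ^ (-n / 2) * C.det ^ (-(1 : ℝ) / 2) *
        ∫ v : ι → ℝ, (v ⬝ᵥ C⁻¹ *ᵥ v) ^ ((q / 2 - 1) * (n / 2)) *
          exp (-(1 / 2) * (v ⬝ᵥ C⁻¹ *ᵥ v) ^ (q / 2)) := by
        simp only [mul_assoc, integral_const_mul]
        rw [integral_sub_right_eq_self (fun v ↦ (v ⬝ᵥ C⁻¹ *ᵥ v) ^ ((q / 2 - 1) * (n / 2)) *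
          exp (-(1 / 2) * (v ⬝ᵥ C⁻¹ *ᵥ v) ^ (q / 2))) μ]
    _ = q / 2 * (2 * π) ^ (-n / 2) * C.det ^ (-(1 : ℝ) / 2) *
        (√C.det * (2 / q * (2 * π) ^ (n / 2))) := by
        rw [integral_comp_posDef_dotProduct_mulVec hC.inv
          (fun r ↦ r ^ ((q / 2 - 1) * (n / 2)) * exp (-(1 / 2) * r ^ (q / 2))),
          jacobian, radial, smul_eq_mul]
    _ = 1 := by
        rw [neg_div, neg_div, rpow_neg two_pi_pos.le, rpow_neg det_pos.le, ← sqrt_eq_rpow]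
        field_simp

/-- The multivariate q-exponential density
`p(u) = (q/2) (2π)^{−d/2} det(C)^{−1/2} r(u)^{(q/2−1)(d/2)} exp{−(1/2) r(u)^{q/2}}`,
with `r(u) = (u−μ)ᵀ C⁻¹ (u−μ)`, integrates to 1 over ℝ^d. -/
theorem qED_density_integrates_to_one
    (d : ℕ) (hd : 1 ≤ d) (q : ℝ) (hq : 0 < q)
    (μ : Fin d → ℝ) (C : Matrix (Fin d) (Fin d) ℝ) (hC : C.PosDef) :
    ∫ u : Fin d → ℝ,
      q / 2 * (2 * Real.pi) ^ (-(d : ℝ) / 2) * C.det ^ (-(1 : ℝ) / 2) *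
        ((u - μ) ⬝ᵥ (C⁻¹ *ᵥ (u - μ))) ^ ((q / 2 - 1) * ((d : ℝ) / 2)) *
        Real.exp (-(1 / 2) * ((u - μ) ⬝ᵥ (C⁻¹ *ᵥ (u - μ))) ^ (q / 2)) = 1 := by
  have : Nonempty (Fin d) := Fin.pos_iff_nonempty.1 hd
  simpa only [Fintype.card_fin] using qED_density_integrates_to_one_general hq μ hC
end

section
/- Let d ≥ 1, q > 0, and let C ∈ ℝ^{d×d} be symmetric positive definite. If the random vector u ∈ ℝ^d has the multivariate q-exponential density p(u) = (q/2)(2π)^{−d/2} det(C)^{−1/2} r(u)^{(q/2−1)(d/2)} exp{−(1/2) r(u)^{q/2}} with r(u) = uᵀ C^{−1} u, then R^q := r(u)^{q/2} follows the Gamma distribution with shape d/2 and rate 1/2 (i.e. the chi-squared distribution with d degrees of freedom); equivalently, the pushforward of the probability measure with density p under the map u ↦ (uᵀ C^{−1} u)^{q/2} equals the measure on (0,∞) with density v ↦ (1/2)^{d/2} v^{d/2−1} e^{−v/2} / Γ(d/2) with respect to Lebesgue measure. -/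
open Real MeasureTheory Matrix

/- In polar coordinates the norm on an `n`-dimensional space has density proportional to
`r ^ (n - 1)`, and a matrix square root of `C⁻¹` turns `R` into the Euclidean norm. Thus Lebesgue
measure pushes forward under `v = R ^ q` to a multiple of `v ^ (n / q - 1)`. The density of `q-ED`
depends on `u` only through `v`, so it survives the pushforward as a factor, in which the exponent
`(1 - 2 / q) * n / 2` of `v` cancels the `q`-dependence of the Jacobian and leaves
`v ^ (n / 2 - 1) * exp (-v / 2)`. -/

theorem map_withDensity_comp {α β : Type*} [MeasurableSpace α] [MeasurableSpace β]
    (μ : Measure α) {f : α → β} {g : β → ENNReal} (hf : Measurable f) (hg : Measurable g) :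
    (μ.withDensity fun x => g (f x)).map f = (μ.map f).withDensity g := by
  ext s hs
  rw [Measure.map_apply hf hs, withDensity_apply _ (hf hs), withDensity_apply _ hs,
    setLIntegral_map hs hg hf]

theorem map_rpow_volume_restrict_Ioi {p : ℝ} (hp : p ≠ 0) :
    (volume.restrict (Set.Ioi (0 : ℝ))).map (· ^ p) =
      (volume.restrict (Set.Ioi (0 : ℝ))).withDensity
        fun v => ENNReal.ofReal (|p|⁻¹ * v ^ (p⁻¹ - 1)) := by
  set ν := (volume.restrict (Set.Ioi (0 : ℝ))).withDensity
    fun v => ENNReal.ofReal (|p|⁻¹ * v ^ (p⁻¹ - 1))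
  have image_root : (· ^ p⁻¹) '' Set.Ioi (0 : ℝ) = Set.Ioi 0 := by
    refine Set.Subset.antisymm (Set.image_subset_iff.2 fun v hv => rpow_pos_of_pos hv _)
      fun r hr => ⟨r ^ p, rpow_pos_of_pos hr _, rpow_rpow_inv (le_of_lt hr) hp⟩
  have map_root : ν.map (· ^ p⁻¹) = volume.restrict (Set.Ioi 0) := by
    have change_of_variables := map_withDensity_abs_det_fderiv_eq_addHaar volume
      measurableSet_Ioi.nullMeasurableSet
      (fun v hv => (hasDerivAt_rpow_const (p := p⁻¹)
        (Or.inl (ne_of_gt hv))).hasDerivWithinAt.hasFDerivWithinAt)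
      ((rpow_left_injOn (inv_ne_zero hp)).mono fun v (hv : 0 < v) => hv.le)
    rw [image_root] at change_of_variables
    rw [← change_of_variables]
    congr 1
    refine withDensity_congr_ae ?_
    filter_upwards [ae_restrict_mem measurableSet_Ioi] with v hv
    rw [ContinuousLinearMap.det_toSpanSingleton, abs_mul, abs_inv,
      abs_of_pos (rpow_pos_of_pos hv _)]
  have root_rpow : (fun v : ℝ => (v ^ p⁻¹) ^ p) =ᵐ[ν] id := by
    refine (withDensity_absolutelyContinuous _ _).ae_le ?_
    filter_upwards [ae_restrict_mem measurableSet_Ioi] with v hv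
    exact rpow_inv_rpow (le_of_lt hv) hp
  rw [← map_root, Measure.map_map (by fun_prop) (by fun_prop)]
  exact (Measure.map_congr root_rpow).trans Measure.map_id

section Norm

variable {E : Type*} [NormedAddCommGroup E] [NormedSpace ℝ E] [FiniteDimensional ℝ E]
  [Nontrivial E] [MeasurableSpace E] [BorelSpace E] (μ : Measure E) [μ.IsAddHaarMeasure]

theorem map_norm_addHaar :
    μ.map (‖·‖) = (volume.restrict (Set.Ioi (0 : ℝ))).withDensity
      fun r => μ.toSphere Set.univ * ENNReal.ofReal (r ^ (Module.finrank ℝ E - 1)) := by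
  set n := Module.finrank ℝ E - 1
  let polar := homeomorphUnitSphereProd E
  calc μ.map (‖·‖) = (μ.restrict {0}ᶜ).map (‖·‖) := by rw [restrict_compl_singleton]
    _ = ((μ.comap (↑)).map polar).map fun x => (x.2 : ℝ) := by
        rw [← map_comap_subtype_coe (measurableSet_singleton 0).compl,
          Measure.map_map (by fun_prop) (by fun_prop), Measure.map_map (by fun_prop) (by fun_prop)]
        simp only [polar, Function.comp_def, homeomorphUnitSphereProd_apply_snd_coe]
    _ = ((μ.toSphere.prod (.volumeIoiPow n)).map Prod.snd).map (↑) := by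
        rw [μ.measurePreserving_homeomorphUnitSphereProd.map_eq,
          Measure.map_map (by fun_prop) (by fun_prop)]
        rfl
    _ = μ.toSphere Set.univ • (volume.restrict (Set.Ioi (0 : ℝ))).withDensity
          fun r => ENNReal.ofReal (r ^ n) := by
        rw [Measure.map_snd_prod, Measure.map_smul, Measure.volumeIoiPow,
          map_withDensity_comp _ (g := fun r => ENNReal.ofReal (r ^ n)) measurable_subtype_coe
            (by fun_prop),
          map_comap_subtype_coe measurableSet_Ioi]
    _ = _ := (withDensity_smul' _ _ (measure_ne_top _ _)).symm

theorem map_norm_rpow_addHaar {p : ℝ} (hp : p ≠ 0) :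
    μ.map (‖·‖ ^ p) = (volume.restrict (Set.Ioi (0 : ℝ))).withDensity
      fun v => μ.toSphere Set.univ *
        ENNReal.ofReal (|p|⁻¹ * v ^ ((Module.finrank ℝ E : ℝ) / p - 1)) := by
  set n := Module.finrank ℝ E
  let h : ℝ → ENNReal := fun v => μ.toSphere Set.univ * ENNReal.ofReal (v ^ (((n : ℝ) - 1) / p))
  have hh : Measurable h := by fun_prop
  have norm_density : μ.map (‖·‖) =
      (volume.restrict (Set.Ioi (0 : ℝ))).withDensity fun r => h (r ^ p) := by
    rw [map_norm_addHaar]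
    refine withDensity_congr_ae ?_
    filter_upwards [ae_restrict_mem measurableSet_Ioi] with r hr
    simp only [h]
    rw [← rpow_mul (le_of_lt hr), mul_div_cancel₀ _ hp, ← rpow_natCast,
      Nat.cast_pred Module.finrank_pos]
  calc μ.map (‖·‖ ^ p) = (μ.map (‖·‖)).map (· ^ p) := by
        rw [Measure.map_map (by fun_prop) (by fun_prop)]
        rfl
    _ = ((volume.restrict (Set.Ioi (0 : ℝ))).map (· ^ p)).withDensity h := by
        rw [norm_density, map_withDensity_comp _ (by fun_prop) hh]
    _ = _ := by
        rw [map_rpow_volume_restrict_Ioi hp, ← withDensity_mul _ (by fun_prop) hh]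
        refine withDensity_congr_ae ?_
        filter_upwards [ae_restrict_mem measurableSet_Ioi] with v hv
        have exponent : p⁻¹ - 1 + ((n : ℝ) - 1) / p = n / p - 1 := by ring
        rw [Pi.mul_apply, mul_left_comm, ← ENNReal.ofReal_mul' (rpow_nonneg (le_of_lt hv) _),
          mul_assoc, ← rpow_add hv, exponent]

end Norm

section QuadraticForm

variable {ι : Type*} [Fintype ι]

theorem toSphere_univ_euclideanSpace [Nonempty ι] :
    (volume : Measure (EuclideanSpace ℝ ι)).toSphere Set.univ =
      ENNReal.ofReal (2 * π ^ ((Fintype.card ι : ℝ) / 2) / Gamma ((Fintype.card ι : ℝ) / 2)) := by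
  have card_pos : 0 < (Fintype.card ι : ℝ) := by exact_mod_cast Fintype.card_pos
  have sqrt_pi_pow : √π ^ Fintype.card ι = π ^ ((Fintype.card ι : ℝ) / 2) := by
    rw [rpow_div_two_eq_sqrt _ pi_pos.le, rpow_natCast]
  rw [Measure.toSphere_apply_univ, finrank_euclideanSpace, EuclideanSpace.volume_ball,
    ENNReal.ofReal_one, one_pow, one_mul, ← ENNReal.ofReal_natCast,
    ← ENNReal.ofReal_mul card_pos.le, sqrt_pi_pow, Gamma_add_one (by positivity)]
  congr 1
  field_simp

theorem dotProduct_transpose_mul_self_mulVec {κ : Type*} [Fintype κ] (B : Matrix κ ι ℝ)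
    (u : ι → ℝ) : u ⬝ᵥ ((Bᵀ * B) *ᵥ u) = ‖WithLp.toLp 2 (B *ᵥ u)‖ ^ 2 := by
  rw [← mulVec_mulVec, dotProduct_mulVec, vecMul_transpose, EuclideanSpace.real_norm_sq_eq]
  simp only [dotProduct, sq]

variable [DecidableEq ι]

theorem map_toLp_mulVec_volume {B : Matrix ι ι ℝ} (hB : B.det ≠ 0) :
    (volume : Measure (ι → ℝ)).map (fun u => WithLp.toLp 2 (B *ᵥ u)) =
      ENNReal.ofReal |B.det|⁻¹ • (volume : Measure (EuclideanSpace ℝ ι)) := by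
  rw [← abs_inv, ← (PiLp.volume_preserving_toLp ι).map_eq, ← Measure.map_smul,
    ← Real.map_matrix_volume_pi_eq_smul_volume_pi hB,
    Measure.map_map (by fun_prop) (LinearMap.continuous_on_pi _).measurable]
  rfl

open scoped MatrixOrder in
theorem exists_eq_transpose_mul_self {A : Matrix ι ι ℝ} (hA : A.PosSemidef) :
    ∃ B : Matrix ι ι ℝ, A = Bᵀ * B ∧ |B.det| = √A.det := by
  obtain ⟨B, rfl⟩ := CStarAlgebra.nonneg_iff_eq_star_mul_self.mp hA.nonneg
  rw [star_eq_conjTranspose, conjTranspose_eq_transpose_of_trivial]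
  exact ⟨B, rfl, by rw [det_mul, det_transpose, sqrt_mul_self_eq_abs]⟩

theorem map_sqrt_dotProduct_mulVec_volume {A : Matrix ι ι ℝ} (hA : A.PosDef) :
    (volume : Measure (ι → ℝ)).map (fun u => √(u ⬝ᵥ (A *ᵥ u))) =
      ENNReal.ofReal (√A.det)⁻¹ • (volume : Measure (EuclideanSpace ℝ ι)).map (‖·‖) := by
  obtain ⟨B, hAB, hdet⟩ := exists_eq_transpose_mul_self hA.posSemidef
  have det_ne_zero : B.det ≠ 0 := by
    rw [← abs_pos, hdet]
    exact sqrt_pos.2 hA.det_pos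
  have sqrt_eq_norm (u : ι → ℝ) : √(u ⬝ᵥ (A *ᵥ u)) = ‖WithLp.toLp 2 (B *ᵥ u)‖ := by
    rw [hAB, dotProduct_transpose_mul_self_mulVec, sqrt_sq (norm_nonneg _)]
  simp_rw [sqrt_eq_norm]
  rw [← hdet, ← Measure.map_smul, ← map_toLp_mulVec_volume det_ne_zero,
    Measure.map_map (by fun_prop) (by fun_prop)]
  rfl

theorem map_dotProduct_mulVec_rpow_volume [Nonempty ι] {A : Matrix ι ι ℝ} (hA : A.PosDef) {p : ℝ}
    (hp : p ≠ 0) :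
    (volume : Measure (ι → ℝ)).map (fun u => (u ⬝ᵥ (A *ᵥ u)) ^ (p / 2)) =
      (volume.restrict (Set.Ioi (0 : ℝ))).withDensity fun v =>
        ENNReal.ofReal ((√A.det)⁻¹ *
          (2 * π ^ ((Fintype.card ι : ℝ) / 2) / Gamma ((Fintype.card ι : ℝ) / 2)) *
          (|p|⁻¹ * v ^ ((Fintype.card ι : ℝ) / p - 1))) := by
  have rpow_half (u : ι → ℝ) : (u ⬝ᵥ (A *ᵥ u)) ^ (p / 2) = √(u ⬝ᵥ (A *ᵥ u)) ^ p :=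
    rpow_div_two_eq_sqrt p (by simpa using hA.posSemidef.dotProduct_mulVec_nonneg u)
  calc (volume : Measure (ι → ℝ)).map (fun u => (u ⬝ᵥ (A *ᵥ u)) ^ (p / 2))
      = (volume.map fun u : ι → ℝ => √(u ⬝ᵥ (A *ᵥ u))).map (· ^ p) := by
        simp_rw [rpow_half]
        rw [Measure.map_map (by fun_prop) (by fun_prop)]
        rfl
    _ = ENNReal.ofReal (√A.det)⁻¹ •
          (volume : Measure (EuclideanSpace ℝ ι)).map (‖·‖ ^ p) := by
        rw [map_sqrt_dotProduct_mulVec_volume hA, Measure.map_smul,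
          Measure.map_map (by fun_prop) (by fun_prop)]
        rfl
    _ = _ := by
        rw [map_norm_rpow_addHaar _ hp, toSphere_univ_euclideanSpace, finrank_euclideanSpace,
          ← withDensity_smul' _ _ ENNReal.ofReal_ne_top]
        congr 1 with v
        rw [Pi.smul_apply, smul_eq_mul, ← ENNReal.ofReal_mul (by positivity),
          ← ENNReal.ofReal_mul (by positivity), mul_assoc]

end QuadraticForm

/-- The density of `q-ED_d(0, C)` as a function of `v = R ^ q`, where `D = det C`. The factor
`r ^ ((q / 2 - 1) * (d / 2))` becomes a power of `v` through `r ^ (q / 2 - 1) = v ^ (1 - 2 / q)`,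
and `|q|` replaces `q` so that negative exponents are covered. -/
noncomputable def qEDProfile (d q D v : ℝ) : ℝ :=
  |q| / 2 * (2 * π) ^ (-d / 2) * D ^ (-(1 : ℝ) / 2) * v ^ ((1 - 2 / q) * (d / 2)) *
    exp (-(1 / 2) * v)

theorem qEDProfile_rpow (d D : ℝ) {q r : ℝ} (hq : q ≠ 0) (hr : 0 ≤ r) :
    qEDProfile d q D (r ^ (q / 2)) =
      |q| / 2 * (2 * π) ^ (-d / 2) * D ^ (-(1 : ℝ) / 2) * r ^ ((q / 2 - 1) * (d / 2)) *
        exp (-(1 / 2) * r ^ (q / 2)) := by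
  have exponent : q / 2 * ((1 - 2 / q) * (d / 2)) = (q / 2 - 1) * (d / 2) := by field_simp
  rw [qEDProfile, ← rpow_mul hr, exponent]

theorem jacobian_mul_qEDProfile (d : ℝ) {q D v : ℝ} (hq : q ≠ 0) (hD : 0 < D) (hv : 0 < v) :
    √D * (2 * π ^ (d / 2) / Gamma (d / 2)) * (|q|⁻¹ * v ^ (d / q - 1)) * qEDProfile d q D v =
      (1 / 2) ^ (d / 2) * v ^ (d / 2 - 1) * exp (-v / 2) / Gamma (d / 2) := by
  have det_cancel : √D * D ^ (-(1 : ℝ) / 2) = 1 := by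
    rw [neg_div, rpow_neg hD.le, ← sqrt_eq_rpow, mul_inv_cancel₀ (sqrt_pos.2 hD).ne']
  have pi_cancel : π ^ (d / 2) * (2 * π) ^ (-d / 2) = (1 / 2) ^ (d / 2) := by
    rw [neg_div, rpow_neg (by positivity), ← div_eq_mul_inv, ← div_rpow pi_pos.le (by positivity)]
    congr 1
    field_simp
  have exponents : v ^ (d / q - 1) * v ^ ((1 - 2 / q) * (d / 2)) = v ^ (d / 2 - 1) := by
    rw [← rpow_add hv]
    congr 1
    field_simp
    ring
  have abs_cancel : |q|⁻¹ * |q| = 1 := inv_mul_cancel₀ (abs_ne_zero.2 hq)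
  calc
    _ = (√D * D ^ (-(1 : ℝ) / 2)) * (|q|⁻¹ * |q|) * (π ^ (d / 2) * (2 * π) ^ (-d / 2)) *
          (v ^ (d / q - 1) * v ^ ((1 - 2 / q) * (d / 2))) * exp (-(1 / 2) * v) / Gamma (d / 2) := by
        rw [qEDProfile]
        ring
    _ = _ := by
        rw [det_cancel, abs_cancel, pi_cancel, exponents, one_mul, one_mul]
        ring_nf

theorem qED_radial_power_is_chiSq_general {ι : Type*} [Fintype ι] [DecidableEq ι] [Nonempty ι]
    {q : ℝ} (hq : q ≠ 0) {C : Matrix ι ι ℝ} (hC : C.PosDef) :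
    Measure.map (fun u : ι → ℝ => (u ⬝ᵥ (C⁻¹ *ᵥ u)) ^ (q / 2))
        (volume.withDensity fun u : ι → ℝ =>
          ENNReal.ofReal
            (|q| / 2 * (2 * π) ^ (-(Fintype.card ι : ℝ) / 2) * C.det ^ (-(1 : ℝ) / 2) *
              (u ⬝ᵥ (C⁻¹ *ᵥ u)) ^ ((q / 2 - 1) * ((Fintype.card ι : ℝ) / 2)) *
              exp (-(1 / 2) * (u ⬝ᵥ (C⁻¹ *ᵥ u)) ^ (q / 2)))) =
      (volume.restrict (Set.Ioi (0 : ℝ))).withDensity fun v : ℝ =>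
        ENNReal.ofReal
          ((1 / 2 : ℝ) ^ ((Fintype.card ι : ℝ) / 2) * v ^ ((Fintype.card ι : ℝ) / 2 - 1) *
            exp (-v / 2) / Gamma ((Fintype.card ι : ℝ) / 2)) := by
  have form_nonneg (u : ι → ℝ) : 0 ≤ u ⬝ᵥ (C⁻¹ *ᵥ u) := by
    simpa using hC.inv.posSemidef.dotProduct_mulVec_nonneg u
  have measurable_profile :
      Measurable fun v => ENNReal.ofReal (qEDProfile (Fintype.card ι) q C.det v) := by
    unfold qEDProfile
    fun_prop
  have sqrt_det_inv : (√C⁻¹.det)⁻¹ = √C.det := by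
    rw [det_nonsing_inv, Ring.inverse_eq_inv', sqrt_inv, inv_inv]
  simp_rw [← qEDProfile_rpow _ _ hq (form_nonneg _)]
  rw [map_withDensity_comp _ (by fun_prop) measurable_profile,
    map_dotProduct_mulVec_rpow_volume hC.inv hq, sqrt_det_inv,
    ← withDensity_mul _ (by fun_prop) measurable_profile]
  refine withDensity_congr_ae ?_
  filter_upwards [ae_restrict_mem measurableSet_Ioi] with v (hv : 0 < v)
  rw [Pi.mul_apply, ← ENNReal.ofReal_mul (by positivity),
    jacobian_mul_qEDProfile _ hq hC.det_pos hv]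

/-- If `u` has the multivariate q-exponential density `q-ED_d(0, C)`, then
`R^q = r(u)^{q/2}` follows the Gamma distribution with shape `d/2` and rate `1/2`
(the chi-squared distribution with `d` degrees of freedom): the pushforward of the
measure with the q-exponential density under `u ↦ (uᵀ C⁻¹ u)^{q/2}` is the measure
on (0,∞) with density `v ↦ (1/2)^{d/2} v^{d/2−1} e^{−v/2} / Γ(d/2)`. -/
theorem qED_radial_power_is_chiSq
    (d : ℕ) (hd : 1 ≤ d) (q : ℝ) (hq : 0 < q)
    (C : Matrix (Fin d) (Fin d) ℝ) (hC : C.PosDef) :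
    Measure.map (fun u : Fin d → ℝ => (u ⬝ᵥ (C⁻¹ *ᵥ u)) ^ (q / 2))
        (volume.withDensity fun u : Fin d → ℝ =>
          ENNReal.ofReal
            (q / 2 * (2 * Real.pi) ^ (-(d : ℝ) / 2) * C.det ^ (-(1 : ℝ) / 2) *
              (u ⬝ᵥ (C⁻¹ *ᵥ u)) ^ ((q / 2 - 1) * ((d : ℝ) / 2)) *
              Real.exp (-(1 / 2) * (u ⬝ᵥ (C⁻¹ *ᵥ u)) ^ (q / 2)))) =
      (volume.restrict (Set.Ioi (0 : ℝ))).withDensity fun v : ℝ =>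
        ENNReal.ofReal
          ((1 / 2 : ℝ) ^ ((d : ℝ) / 2) * v ^ ((d : ℝ) / 2 - 1) *
            Real.exp (-v / 2) / Real.Gamma ((d : ℝ) / 2)) := by
  have : Nonempty (Fin d) := ⟨⟨0, hd⟩⟩
  simpa only [Fintype.card_fin, abs_of_pos hq] using
    qED_radial_power_is_chiSq_general hq.ne' hC
end

section
/- Let p be a probability density on (0, ∞), and for each dimension n define the density generator g_n(r) = ∫_0^∞ (s/(2π))^{n/2} exp{−rs/2} p(s) ds. Then the corresponding family of elliptic densities is marginally consistent: for every d ≥ 2 and every symmetric positive definite C ∈ ℝ^{d×d}, writing u = (u₁, u_d) with u₁ ∈ ℝ^{d−1} and C₁₁ ∈ ℝ^{(d−1)×(d−1)} the leading principal submatrix of C, one has ∫_ℝ det(C)^{−1/2} g_d(uᵀ C^{−1} u) du_d = det(C₁₁)^{−1/2} g_{d−1}(u₁ᵀ C₁₁^{−1} u₁) for all u₁ ∈ ℝ^{d−1}. -/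
open Real MeasureTheory Matrix

/-!
Write `A` for the leading block of `C`, and let `σ`, `μ` be the variance and mean of the last
coordinate given that the others equal `u`, under the centred Gaussian with covariance `C`. Block
inversion around `A` gives `det C = det A * σ` and completes the square in the last coordinate `t`:
the quadratic form of `C⁻¹` at `(u, t)` is that of `A⁻¹` at `u` plus `(t - μ)² / σ`. For a fixed
scale `s` the `(m + 1)`-dimensional Gaussian generator therefore splits into the `m`-dimensional one
times `√σ` and the density of `N(μ, σ / s)` in `t`. The latter has mass `1` for every `s`, so
Tonelli's theorem lets the mixture over `s` pass through the integral over `t`.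
-/

section BlockInverse

variable {m n R : Type*} [Fintype m] [Fintype n] [DecidableEq m] [DecidableEq n] [CommRing R]

lemma dotProduct_inv_fromBlocks_mulVec (A : Matrix m m R) (B : Matrix m n R) (C : Matrix n m R)
    (D : Matrix n n R) (hA : IsUnit A) (hS : IsUnit (D - C * A⁻¹ * B)) (x : m → R) (y : n → R) :
    Sum.elim x y ⬝ᵥ ((fromBlocks A B C D)⁻¹ *ᵥ Sum.elim x y) =
      x ⬝ᵥ (A⁻¹ *ᵥ x) +
        (y - (x ᵥ* A⁻¹) ᵥ* B) ⬝ᵥ ((D - C * A⁻¹ * B)⁻¹ *ᵥ (y - C *ᵥ (A⁻¹ *ᵥ x))) := by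
  let := hA.invertible
  rw [← invOf_eq_nonsing_inv A] at hS ⊢
  let := hS.invertible
  let := fromBlocks₁₁Invertible A B C D
  rw [← invOf_eq_nonsing_inv (fromBlocks A B C D), ← invOf_eq_nonsing_inv (D - C * ⅟A * B),
    invOf_fromBlocks₁₁_eq, fromBlocks_mulVec, sumElim_dotProduct_sumElim]
  simp only [Sum.elim_comp_inl, Sum.elim_comp_inr, add_mulVec, neg_mulVec, mulVec_sub,
    sub_vecMul, sub_dotProduct, dotProduct_sub, dotProduct_add, dotProduct_neg, dotProduct_mulVec,
    vecMul_vecMul, Matrix.mul_assoc]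
  ring

lemma comp_equiv_dotProduct_inv_submatrix_mulVec (M : Matrix m m R) (e : n ≃ m) (x y : m → R) :
    (x ∘ e) ⬝ᵥ ((M.submatrix e e)⁻¹ *ᵥ (y ∘ e)) = x ⬝ᵥ (M⁻¹ *ᵥ y) := by
  rw [inv_submatrix_equiv, submatrix_mulVec_equiv, Function.comp_assoc, e.self_comp_symm,
    Function.comp_id, comp_equiv_dotProduct_comp_equiv]

end BlockInverse

section LastCoordinate

variable {m : ℕ} {R : Type*} [CommRing R]

/-- The leading principal block `C₁₁`, the covariance of all coordinates but the last. -/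
abbrev leadingBlock (C : Matrix (Fin (m + 1)) (Fin (m + 1)) R) : Matrix (Fin m) (Fin m) R :=
  C.submatrix Fin.castSucc Fin.castSucc

/-- The covariances of the last coordinate with the others. -/
def lastCov (C : Matrix (Fin (m + 1)) (Fin (m + 1)) R) : Fin m → R :=
  fun i => C i.castSucc (Fin.last m)

/-- The conditional mean of the last coordinate given that the others equal `u`, for the centred
Gaussian with covariance `C`. -/
noncomputable def condMean (C : Matrix (Fin (m + 1)) (Fin (m + 1)) R) (u : Fin m → R) : R :=
  lastCov C ⬝ᵥ ((leadingBlock C)⁻¹ *ᵥ u)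

/-- The conditional variance of the last coordinate given the others, for a Gaussian with
covariance `C`; for symmetric `C` it is the Schur complement of `leadingBlock C`. -/
noncomputable def condVar (C : Matrix (Fin (m + 1)) (Fin (m + 1)) R) : R :=
  C (Fin.last m) (Fin.last m) - condMean C (lastCov C)

variable {C : Matrix (Fin (m + 1)) (Fin (m + 1)) R}

lemma submatrix_finSumFinEquiv_eq_fromBlocks (hC : C.IsSymm) :
    C.submatrix (finSumFinEquiv : Fin m ⊕ Fin 1 ≃ Fin (m + 1)) finSumFinEquiv =
      fromBlocks (leadingBlock C) (replicateCol (Fin 1) (lastCov C))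
        (replicateRow (Fin 1) (lastCov C)) (diagonal fun _ => C (Fin.last m) (Fin.last m)) := by
  ext (i | i) (j | j)
  · rfl
  · obtain rfl := Subsingleton.elim j 0
    rfl
  · obtain rfl := Subsingleton.elim i 0
    exact hC.apply _ _
  · obtain rfl := Subsingleton.elim i 0
    obtain rfl := Subsingleton.elim j 0
    simp [show Fin.natAdd m (0 : Fin 1) = Fin.last m from rfl]

variable (C) in
lemma schurComplement_eq_diagonal_condVar :
    diagonal (fun _ => C (Fin.last m) (Fin.last m)) - replicateRow (Fin 1) (lastCov C) *
      (leadingBlock C)⁻¹ * replicateCol (Fin 1) (lastCov C) = diagonal fun _ => condVar C := by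
  ext i j
  obtain rfl := Subsingleton.elim i j
  rw [Matrix.mul_assoc, ← replicateCol_mulVec, Matrix.sub_apply, diagonal_apply_eq,
    diagonal_apply_eq]
  rfl

lemma det_eq_det_leadingBlock_mul_condVar (hC : C.IsSymm) (hA : IsUnit (leadingBlock C)) :
    C.det = (leadingBlock C).det * condVar C := by
  let := hA.invertible
  rw [← det_submatrix_equiv_self (finSumFinEquiv : Fin m ⊕ Fin 1 ≃ Fin (m + 1)),
    submatrix_finSumFinEquiv_eq_fromBlocks hC, det_fromBlocks₁₁, invOf_eq_nonsing_inv,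
    schurComplement_eq_diagonal_condVar]
  simp

lemma dotProduct_inv_diagonal_mulVec_fin_one {K : Type*} [Field K] (a : K) (y : Fin 1 → K) :
    y ⬝ᵥ ((diagonal fun _ => a)⁻¹ *ᵥ y) = y 0 ^ 2 / a := by
  rw [inv_subsingleton, dotProduct, Fin.sum_univ_one, mulVec_diagonal, diagonal_apply_eq,
    Ring.inverse_eq_inv']
  ring

lemma dotProduct_inv_mulVec_snoc {K : Type*} [Field K] {C : Matrix (Fin (m + 1)) (Fin (m + 1)) K}
    (hC : C.IsSymm) (hA : IsUnit (leadingBlock C)) (hσ : condVar C ≠ 0) (u : Fin m → K) (t : K) :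
    (Fin.snoc u t : Fin (m + 1) → K) ⬝ᵥ (C⁻¹ *ᵥ (Fin.snoc u t : Fin (m + 1) → K)) =
      u ⬝ᵥ ((leadingBlock C)⁻¹ *ᵥ u) + (t - condMean C u) ^ 2 / condVar C := by
  let e : Fin m ⊕ Fin 1 ≃ Fin (m + 1) := finSumFinEquiv
  have snoc_comp : (Fin.snoc u t : Fin (m + 1) → K) ∘ e = Sum.elim u fun _ => t := by
    ext (i | i)
    · exact Fin.snoc_castSucc (α := fun _ => K) t u i
    · obtain rfl := Subsingleton.elim i 0
      exact Fin.snoc_last (α := fun _ => K) t u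
  have hA_symm : (leadingBlock C)⁻¹.IsSymm := (hC.submatrix _).inv
  have mean_row : replicateRow (Fin 1) (lastCov C) *ᵥ ((leadingBlock C)⁻¹ *ᵥ u) =
      fun _ => condMean C u := rfl
  have mean_col : (u ᵥ* (leadingBlock C)⁻¹) ᵥ* replicateCol (Fin 1) (lastCov C) =
      fun _ => condMean C u := by
    rw [← hA_symm.eq, vecMul_transpose]
    ext
    exact dotProduct_comm _ _
  have hS := schurComplement_eq_diagonal_condVar C
  have hS_unit : IsUnit (diagonal fun _ : Fin 1 => condVar C) := by
    simpa [isUnit_iff_isUnit_det] using hσ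
  rw [← comp_equiv_dotProduct_inv_submatrix_mulVec C e, snoc_comp,
    submatrix_finSumFinEquiv_eq_fromBlocks hC,
    dotProduct_inv_fromBlocks_mulVec _ _ _ _ hA (hS ▸ hS_unit), hS, mean_row, mean_col,
    dotProduct_inv_diagonal_mulVec_fin_one]
  rfl

end LastCoordinate

section GaussianGenerator

open ProbabilityTheory

/-- The density generator of the centred Gaussian on `ℝⁿ` with precision `s`: the density of
`N(0, s⁻¹ C)` at `x` is `det(C)^{-1/2}` times its value at `r = xᵀ C⁻¹ x`. -/
noncomputable def gaussianGenerator (n : ℕ) (r s : ℝ) : ℝ :=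
  (s / (2 * π)) ^ ((n : ℝ) / 2) * rexp (-(r * s) / 2)

lemma gaussianGenerator_nonneg (n : ℕ) (r : ℝ) {s : ℝ} (hs : 0 ≤ s) :
    0 ≤ gaussianGenerator n r s := by
  unfold gaussianGenerator
  positivity

@[fun_prop]
lemma measurable_gaussianGenerator {α : Type*} [MeasurableSpace α] (n : ℕ) {r s : α → ℝ}
    (hr : Measurable r) (hs : Measurable s) :
    Measurable fun a => gaussianGenerator n (r a) (s a) := by
  unfold gaussianGenerator
  fun_prop

lemma gaussianGenerator_succ (n : ℕ) (q μ t : ℝ) {σ s : ℝ} (hσ : 0 < σ) (hs : 0 < s) :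
    gaussianGenerator (n + 1) (q + (t - μ) ^ 2 / σ) s =
      √σ * gaussianGenerator n q s * gaussianPDFReal μ (σ / s).toNNReal t := by
  have rpow_split : (s / (2 * π)) ^ (((n + 1 : ℕ) : ℝ) / 2) =
      (s / (2 * π)) ^ ((n : ℝ) / 2) * √(s / (2 * π)) := by
    rw [sqrt_eq_rpow, ← rpow_add (by positivity)]
    congr 1
    push_cast
    ring
  have exp_split : rexp (-((q + (t - μ) ^ 2 / σ) * s) / 2) =
      rexp (-(q * s) / 2) * rexp (-(t - μ) ^ 2 / (2 * (σ / s))) := by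
    rw [← exp_add]
    congr 1
    field_simp
    ring
  have sqrt_split : √(s / (2 * π)) = √σ * (√(2 * π * (σ / s)))⁻¹ := by
    rw [← sqrt_inv, ← sqrt_mul hσ.le]
    congr 1
    field_simp
  rw [gaussianGenerator, gaussianGenerator, gaussianPDFReal, coe_toNNReal _ (by positivity),
    rpow_split, exp_split, sqrt_split]
  ring

lemma lintegral_gaussianGenerator_succ (n : ℕ) (q μ : ℝ) {σ s : ℝ} (hσ : 0 < σ) (hs : 0 < s) :
    ∫⁻ t, ENNReal.ofReal (gaussianGenerator (n + 1) (q + (t - μ) ^ 2 / σ) s) =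
      ENNReal.ofReal (√σ) * ENNReal.ofReal (gaussianGenerator n q s) := by
  have hv : (σ / s).toNNReal ≠ 0 := by simpa using div_pos hσ hs
  have h_nonneg := gaussianGenerator_nonneg n q hs.le
  simp_rw [gaussianGenerator_succ n q μ _ hσ hs,
    ENNReal.ofReal_mul (mul_nonneg (sqrt_nonneg σ) h_nonneg)]
  rw [lintegral_const_mul _ (by fun_prop), lintegral_gaussianPDFReal_eq_one μ hv, mul_one,
    ENNReal.ofReal_mul (sqrt_nonneg σ)]

lemma integrable_gaussianGenerator {ν : Measure ℝ} [IsFiniteMeasure ν] (hν : ∀ᵐ s ∂ν, 0 < s)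
    (n : ℕ) {r : ℝ} (hr : 0 < r) : Integrable (gaussianGenerator n r) ν := by
  have h_exp : Integrable (fun s => rexp ((-(r / 2) - r / 2) * s)) ν := by
    refine Integrable.of_bound (by fun_prop) 1 ?_
    filter_upwards [hν] with s hs
    rw [norm_of_nonneg (exp_nonneg _), exp_le_one_iff]
    nlinarith
  have h_rpow := integrable_rpow_mul_exp_of_integrable_exp_mul (X := id) (v := -(r / 2))
    (t := r / 2) (by positivity) (by simp) h_exp (p := (n : ℝ) / 2) (by positivity)
  refine (h_rpow.const_mul (((2 * π) ^ ((n : ℝ) / 2))⁻¹)).congr ?_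
  filter_upwards [hν] with s hs
  rw [gaussianGenerator, div_rpow hs.le (by positivity), id_eq]
  ring_nf

end GaussianGenerator

section ScaleMixture

/-- The density generator in dimension `n` of the scale mixture of Gaussians whose precision has
law `ν`. A mixing law is encoded as a measure on `ℝ` for which almost every `s` is positive. Where
the mixture diverges, which for finite `ν` can happen only at `r ≤ 0`, the value is `0`. -/
noncomputable def scaleMixtureGenerator (ν : Measure ℝ) (n : ℕ) (r : ℝ) : ℝ :=
  ∫ s, gaussianGenerator n r s ∂ν

variable {ν : Measure ℝ}

lemma scaleMixtureGenerator_eq_toReal_lintegral (hν : ∀ᵐ s ∂ν, 0 < s) (n : ℕ) (r : ℝ) :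
    scaleMixtureGenerator ν n r = (∫⁻ s, ENNReal.ofReal (gaussianGenerator n r s) ∂ν).toReal :=
  integral_eq_lintegral_of_nonneg_ae (hν.mono fun _ hs => gaussianGenerator_nonneg n r hs.le)
    (by fun_prop)

lemma lintegral_lintegral_gaussianGenerator_succ [SFinite ν] (hν : ∀ᵐ s ∂ν, 0 < s) (n : ℕ)
    (q μ : ℝ) {σ : ℝ} (hσ : 0 < σ) :
    ∫⁻ t, ∫⁻ s, ENNReal.ofReal (gaussianGenerator (n + 1) (q + (t - μ) ^ 2 / σ) s) ∂ν =
      ENNReal.ofReal (√σ) * ∫⁻ s, ENNReal.ofReal (gaussianGenerator n q s) ∂ν := by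
  rw [lintegral_lintegral_swap (by unfold Function.uncurry; fun_prop),
    ← lintegral_const_mul _ (by fun_prop)]
  exact lintegral_congr_ae (hν.mono fun _ hs => lintegral_gaussianGenerator_succ n q μ hσ hs)

lemma integral_scaleMixtureGenerator_succ [IsFiniteMeasure ν] (hν : ∀ᵐ s ∂ν, 0 < s) (n : ℕ)
    {q σ : ℝ} (hq : 0 ≤ q) (hσ : 0 < σ) (μ : ℝ) :
    ∫ t, scaleMixtureGenerator ν (n + 1) (q + (t - μ) ^ 2 / σ) =
      √σ * scaleMixtureGenerator ν n q := by
  have h_finite : ∀ᵐ t,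
      ∫⁻ s, ENNReal.ofReal (gaussianGenerator (n + 1) (q + (t - μ) ^ 2 / σ) s) ∂ν < ⊤ := by
    -- The point `t = μ` is genuinely exceptional when `q = 0`: the mixture may be infinite there.
    filter_upwards [Measure.ae_ne volume μ] with t ht
    have : 0 < (t - μ) ^ 2 := sq_pos_of_ne_zero (sub_ne_zero.2 ht)
    exact (integrable_gaussianGenerator hν (n + 1) (by positivity)).lintegral_lt_top
  simp_rw [scaleMixtureGenerator_eq_toReal_lintegral hν]
  rw [integral_toReal (Measurable.lintegral_prod_right (by fun_prop)).aemeasurable h_finite,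
    lintegral_lintegral_gaussianGenerator_succ hν n q μ hσ, ENNReal.toReal_mul,
    ENNReal.toReal_ofReal (sqrt_nonneg σ)]

/-- The measure on `(0, ∞)` with density `p`, as a mixing law on `ℝ`. -/
noncomputable def densityLaw (p : ℝ → ℝ) : Measure ℝ :=
  (volume.restrict (Set.Ioi 0)).withDensity fun s => ENNReal.ofReal (p s)

lemma ae_pos_densityLaw (p : ℝ → ℝ) : ∀ᵐ s ∂densityLaw p, 0 < s :=
  (withDensity_absolutelyContinuous _ _).ae_le (ae_restrict_mem measurableSet_Ioi)

lemma isFiniteMeasure_densityLaw {p : ℝ → ℝ} (hp : IntegrableOn p (Set.Ioi 0)) :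
    IsFiniteMeasure (densityLaw p) :=
  isFiniteMeasure_withDensity_ofReal hp.hasFiniteIntegral

lemma scaleMixtureGenerator_densityLaw {p : ℝ → ℝ} (hp : Measurable p)
    (hp_nonneg : ∀ s, 0 < s → 0 ≤ p s) (n : ℕ) (r : ℝ) :
    scaleMixtureGenerator (densityLaw p) n r =
      ∫ s in Set.Ioi (0 : ℝ), (s / (2 * π)) ^ ((n : ℝ) / 2) * rexp (-(r * s) / 2) * p s := by
  rw [scaleMixtureGenerator, densityLaw,
    integral_withDensity_eq_integral_toReal_smul (by fun_prop) (by simp)]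
  refine setIntegral_congr_fun measurableSet_Ioi fun s hs => ?_
  simp only [ENNReal.toReal_ofReal (hp_nonneg s hs), smul_eq_mul, gaussianGenerator, mul_comm]

end ScaleMixture

theorem kano_mixture_elliptic_consistency_general {ν : Measure ℝ} [IsFiniteMeasure ν]
    (hν : ∀ᵐ s ∂ν, 0 < s) {m : ℕ} {C : Matrix (Fin (m + 1)) (Fin (m + 1)) ℝ} (hC : C.PosDef)
    (u : Fin m → ℝ) :
    ∫ t : ℝ, C.det ^ (-(1 : ℝ) / 2) *
        scaleMixtureGenerator ν (m + 1) (Fin.snoc u t ⬝ᵥ (C⁻¹ *ᵥ Fin.snoc u t)) =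
      (leadingBlock C).det ^ (-(1 : ℝ) / 2) *
        scaleMixtureGenerator ν m (u ⬝ᵥ ((leadingBlock C)⁻¹ *ᵥ u)) := by
  have hC_symm : C.IsSymm := hC.isHermitian
  have hA : (leadingBlock C).PosDef := hC.submatrix (Fin.castSucc_injective m)
  have hq : 0 ≤ u ⬝ᵥ ((leadingBlock C)⁻¹ *ᵥ u) := hA.inv.posSemidef.dotProduct_mulVec_nonneg u
  have h_det := det_eq_det_leadingBlock_mul_condVar hC_symm hA.isUnit
  have hσ : 0 < condVar C := pos_of_mul_pos_right (h_det ▸ hC.det_pos) hA.det_pos.le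
  have rpow_cancel : condVar C ^ (-(1 : ℝ) / 2) * √(condVar C) = 1 := by
    rw [sqrt_eq_rpow, ← rpow_add hσ]
    norm_num
  simp_rw [dotProduct_inv_mulVec_snoc hC_symm hA.isUnit hσ.ne']
  rw [integral_const_mul, integral_scaleMixtureGenerator_succ hν m hq hσ, h_det,
    mul_rpow hA.det_pos.le hσ.le, mul_assoc, ← mul_assoc (condVar C ^ _), rpow_cancel, one_mul]

/-- Kano's sufficiency: if the density generator in dimension `n` is the scale mixture
of Gaussians `g_n(r) = ∫₀^∞ (s/(2π))^{n/2} exp(−rs/2) p(s) ds` for a mixing probability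
density `p` on (0,∞) independent of the dimension, then the resulting family of elliptic
densities is marginally consistent: integrating out the last coordinate of the
`d`-dimensional density gives the `(d−1)`-dimensional density with the leading principal
submatrix of `C`. -/
theorem kano_mixture_elliptic_consistency
    (p : ℝ → ℝ) (hp_meas : Measurable p) (hp_nonneg : ∀ s : ℝ, 0 < s → 0 ≤ p s)
    (hp_prob : ∫ s in Set.Ioi (0 : ℝ), p s = 1)
    (g : ℕ → ℝ → ℝ)
    (hg : ∀ (n : ℕ) (r : ℝ),
      g n r = ∫ s in Set.Ioi (0 : ℝ), (s / (2 * Real.pi)) ^ ((n : ℝ) / 2) *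
        Real.exp (-(r * s) / 2) * p s)
    (m : ℕ) (hm : 1 ≤ m)
    (C : Matrix (Fin (m + 1)) (Fin (m + 1)) ℝ) (hC : C.PosDef) :
    ∀ u₁ : Fin m → ℝ,
      ∫ t : ℝ,
        C.det ^ (-(1 : ℝ) / 2) *
          g (m + 1) (Fin.snoc u₁ t ⬝ᵥ (C⁻¹ *ᵥ Fin.snoc u₁ t)) =
        (C.submatrix Fin.castSucc Fin.castSucc).det ^ (-(1 : ℝ) / 2) *
          g m (u₁ ⬝ᵥ ((C.submatrix Fin.castSucc Fin.castSucc)⁻¹ *ᵥ u₁)) := by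
  have := isFiniteMeasure_densityLaw (.of_integral_ne_zero (hp_prob.trans_ne one_ne_zero))
  simpa only [hg, ← scaleMixtureGenerator_densityLaw hp_meas hp_nonneg] using
    kano_mixture_elliptic_consistency_general (ae_pos_densityLaw p) hC
end
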